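/- arXiv:2208.08756 — 2 statements merged into one kernel-verified Lean document; each statement's English description precedes it below -/
import Mathlib

section
/- Let n >= 1, let q be a prime power and F_q a finite field with q elements, and let lambda be a generator of the multiplicative group of F_q (so lambda has order q - 1). Then there exists an element s of GL_n(F_q) of order q^n - 1 with determinant equal to lambda. -/
/-!
Let `L` be the extension of `F` of degree `n`. Multiplication by a unit of `L` is an `F`-linear
automorphism of `L ≅ Fⁿ` whose determinant is the norm, so it suffices to find a generator of the
cyclic group `Lˣ` with norm `λ`. The norm `Lˣ → Fˣ` is surjective, and generators lift along any
surjection of finite cyclic groups because `(ℤ/m)ˣ → (ℤ/d)ˣ` is onto whenever `d ∣ m`.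
-/

section LiftingGenerators

theorem exists_coprime_modEq_of_dvd {d m k : ℕ} (hm : m ≠ 0) (hdm : d ∣ m) (hk : k.Coprime d) :
    ∃ l : ℕ, l.Coprime m ∧ l ≡ k [MOD d] := by
  have : NeZero m := ⟨hm⟩
  obtain ⟨u, hu⟩ := ZMod.unitsMap_surjective hdm (ZMod.unitOfCoprime k hk)
  refine ⟨(u : ZMod m).val, ZMod.val_coe_unit_coprime u, ?_⟩
  have cast_u : ((u : ZMod m).cast : ZMod d) = k := by
    rw [← ZMod.unitsMap_val hdm, hu, ZMod.coe_unitOfCoprime]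
  rw [← ZMod.natCast_eq_natCast_iff, ZMod.natCast_val, cast_u]

theorem coprime_orderOf_of_orderOf_pow_eq {M : Type*} [Monoid M] {x : M} {k : ℕ}
    (hx : IsOfFinOrder x) (h : orderOf (x ^ k) = orderOf x) : k.Coprime (orderOf x) := by
  rw [hx.orderOf_pow, Nat.div_eq_self] at h
  exact Nat.coprime_comm.mp (h.resolve_left hx.orderOf_pos.ne')

theorem exists_coprime_map_pow_eq {M N : Type*} [Monoid M] [Monoid N] (f : M →* N) {x : M} {y : N}
    (hx : IsOfFinOrder x) (hy : y ∈ Submonoid.powers (f x)) (hxy : orderOf y = orderOf (f x)) :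
    ∃ l : ℕ, l.Coprime (orderOf x) ∧ f (x ^ l) = y := by
  obtain ⟨k, rfl⟩ := hy
  have hfx : IsOfFinOrder (f x) := f.isOfFinOrder hx
  have hk : k.Coprime (orderOf (f x)) := coprime_orderOf_of_orderOf_pow_eq hfx hxy
  obtain ⟨l, hl, hlk⟩ := exists_coprime_modEq_of_dvd hx.orderOf_pos.ne' (orderOf_map_dvd f x) hk
  exact ⟨l, hl, (map_pow f x l).trans (hfx.pow_eq_pow_iff_modEq.mpr hlk)⟩

theorem exists_generator_map_eq {G H : Type*} [Group G] [Finite G] [IsCyclic G] [Group H]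
    {f : G →* H} (hf : Function.Surjective f) {h : H} (hh : ∀ y, y ∈ Subgroup.zpowers h) :
    ∃ g : G, (∀ x, x ∈ Subgroup.zpowers g) ∧ f g = h := by
  have : Finite H := Finite.of_surjective f hf
  obtain ⟨g, hg⟩ := IsCyclic.exists_generator (α := G)
  have hfg : ∀ y, y ∈ Subgroup.zpowers (f g) := by
    intro y
    obtain ⟨x, rfl⟩ := hf y
    rw [← MonoidHom.map_zpowers]
    exact Subgroup.mem_map_of_mem f (hg x)
  have same_order : orderOf h = orderOf (f g) := by
    rw [orderOf_eq_card_of_forall_mem_zpowers hh, orderOf_eq_card_of_forall_mem_zpowers hfg]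
  obtain ⟨l, hl, hlh⟩ := exists_coprime_map_pow_eq f (isOfFinOrder_of_finite g)
    (mem_powers_iff_mem_zpowers.mpr (hfg h)) same_order
  refine ⟨g ^ l, fun x ↦ ?_, hlh⟩
  exact Subgroup.zpowers_le.mpr (mem_zpowers_pow_iff.mpr hl) (hg x)

end LiftingGenerators

theorem exists_generator_units_norm_eq (K : Type*) {L : Type*} [Field K] [Field L] [Algebra K L]
    [Finite L] {c : Kˣ} (hc : ∀ a, a ∈ Subgroup.zpowers c) :
    ∃ x : Lˣ, (∀ y, y ∈ Subgroup.zpowers x) ∧ Units.map (Algebra.norm K) x = c :=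
  exists_generator_map_eq (FiniteField.unitsMap_norm_surjective K L) hc

section RegularRepresentation

variable {ι R S : Type*} [Fintype ι] [DecidableEq ι] [CommRing R] [Ring S] [Algebra R S]

/-- The left regular representation of the unit group of an `R`-algebra, written in matrices with
respect to an `R`-basis. The Singer cycles arise as its values. -/
noncomputable def unitsLeftMulMatrix (b : Module.Basis ι R S) : Sˣ →* GL ι R :=
  Units.map (Algebra.leftMulMatrix b : S →* Matrix ι ι R)

theorem unitsLeftMulMatrix_injective (b : Module.Basis ι R S) :
    Function.Injective (unitsLeftMulMatrix b) :=
  Units.map_injective (Algebra.leftMulMatrix_injective b)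

theorem det_unitsLeftMulMatrix (b : Module.Basis ι R S) (x : Sˣ) :
    Matrix.GeneralLinearGroup.det (unitsLeftMulMatrix b x) = Units.map (Algebra.norm R) x :=
  Units.ext (Algebra.norm_eq_matrix_det b (x : S)).symm

end RegularRepresentation

/-- **Singer cycles of `GL_n(q)` with prescribed determinant.** If `λ` generates the
multiplicative group of the finite field `F_q`, then there is an element of
`GL_n(F_q)` of order `q^n - 1` whose determinant is `λ`. -/
theorem exists_singer_with_det (n : ℕ) (hn : 1 ≤ n) (q : ℕ) (hq : IsPrimePow q)
    (F : Type*) [Field F] [Fintype F] (hF : Fintype.card F = q)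
    (lam : Fˣ) (hlam : ∀ μ : Fˣ, μ ∈ Subgroup.zpowers lam) :
    ∃ s : GL (Fin n) F, orderOf s = q ^ n - 1 ∧
      Matrix.GeneralLinearGroup.det s = lam := by
  obtain ⟨p, _⟩ := CharP.exists F
  have : Fact p.Prime := ⟨CharP.char_is_prime F p⟩
  have : NeZero n := ⟨Nat.one_le_iff_ne_zero.mp hn⟩
  let L := FiniteField.Extension F p n
  let b : Module.Basis (Fin n) F L :=
    Module.finBasisOfFinrankEq F L (FiniteField.finrank_extension F p n)
  obtain ⟨x, generates, norm_x⟩ := exists_generator_units_norm_eq F (L := L) hlam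
  refine ⟨unitsLeftMulMatrix b x, ?_, (det_unitsLeftMulMatrix b x).trans norm_x⟩
  calc orderOf (unitsLeftMulMatrix b x)
      = orderOf x := orderOf_injective _ (unitsLeftMulMatrix_injective b) x
    _ = Nat.card Lˣ := orderOf_eq_card_of_forall_mem_zpowers generates
    _ = Nat.card L - 1 := Nat.card_units L
    _ = q ^ n - 1 := by
      rw [FiniteField.natCard_extension, Nat.card_eq_fintype_card, hF]
end

section
/- Let f be a positive integer and q = 2^f. Then the symplectic group Sp_4(F_q) contains an element h of order q + 1 whose centralizer in Sp_4(F_q) has cardinality exactly (q + 1)^2 if and only if f > 1. -/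
/-!
The decomposition of `R^(ι ⊕ ι)` into hyperbolic planes embeds `SL₂(R)^ι` in `Sp`, and an element
of the image without nonzero intertwiners between distinct planes is centralized only by blocks. Let
`ζ` generate the norm one group of `F_{q²}` over `F_q`, cyclic of order `q + 1`, and let it act on
two planes as multiplication by `ζ` and by `ζ²`. The block centralizers have order `q + 1` each if
`ζ⁴ ≠ 1`, and there are no intertwiners if the traces of `ζ` and `ζ²` differ, that is, if `ζ ≠ 1`
and `ζ³ ≠ 1`; both hold once `q + 1 > 4`.

If `q ≤ 3`, the characteristic `p` divides the order of the centralizer of every `h` with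
`h^(q+1) = 1`, which therefore is not `(q + 1)²`. A symmetric `N ≠ 0` with `N J N = 0` and
`h N hᵀ = N` gives the element `1 + N J` of order `p` commuting with `h`. If `h v = ± v` with
`v ≠ 0`, take `N = v vᵀ`. Otherwise `h² = t h - 1` with `t = -1` for `q = 2` and `t = 0` for
`q = 3`, and by Chevalley–Warning some `v ≠ 0` is orthogonal to `h v`; then `⟨v, h v⟩` is a totally
isotropic `h`-invariant plane, and `N` is an `h`-invariant symmetric tensor on it.
-/

open Matrix

section PlaneSum

variable {ι R : Type*} [DecidableEq ι] [CommRing R]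

/-- The endomorphism of `R^(ι ⊕ ι)` acting by `g i` on the `i`-th hyperbolic plane, which is spanned
by the basis vectors `inl i` and `inr i`; the planes are pairwise orthogonal for the form `J`. -/
def planeSumMatrix (g : ι → Matrix (Fin 2) (Fin 2) R) : Matrix (ι ⊕ ι) (ι ⊕ ι) R :=
  fromBlocks (diagonal fun i ↦ g i 0 0) (diagonal fun i ↦ g i 0 1)
    (diagonal fun i ↦ g i 1 0) (diagonal fun i ↦ g i 1 1)

/-- The component of `M` that maps the `j`-th hyperbolic plane to the `i`-th one. -/
def planeBlock (M : Matrix (ι ⊕ ι) (ι ⊕ ι) R) (i j : ι) : Matrix (Fin 2) (Fin 2) R :=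
  !![M (.inl i) (.inl j), M (.inl i) (.inr j); M (.inr i) (.inl j), M (.inr i) (.inr j)]

theorem planeBlock_planeSumMatrix_self (g : ι → Matrix (Fin 2) (Fin 2) R) (i : ι) :
    planeBlock (planeSumMatrix g) i i = g i := by
  ext a b
  fin_cases a <;> fin_cases b <;> simp [planeBlock, planeSumMatrix]

theorem planeSumMatrix_injective :
    Function.Injective (planeSumMatrix : (ι → Matrix (Fin 2) (Fin 2) R) → _) := fun g g' h ↦
  funext fun i ↦ by
    rw [← planeBlock_planeSumMatrix_self g, h, planeBlock_planeSumMatrix_self]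

theorem planeSumMatrix_planeBlock {M : Matrix (ι ⊕ ι) (ι ⊕ ι) R}
    (hM : ∀ i j, i ≠ j → planeBlock M i j = 0) :
    planeSumMatrix (fun i ↦ planeBlock M i i) = M := by
  ext (i | i) (j | j) <;> obtain rfl | hij := eq_or_ne i j
  case inl.inl.inr => simpa [planeSumMatrix, hij] using! (congrFun₂ (hM i j hij) 0 0).symm
  case inl.inr.inr => simpa [planeSumMatrix, hij] using! (congrFun₂ (hM i j hij) 0 1).symm
  case inr.inl.inr => simpa [planeSumMatrix, hij] using! (congrFun₂ (hM i j hij) 1 0).symm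
  case inr.inr.inr => simpa [planeSumMatrix, hij] using! (congrFun₂ (hM i j hij) 1 1).symm
  all_goals simp [planeSumMatrix, planeBlock]

theorem planeSumMatrix_one : planeSumMatrix (1 : ι → Matrix (Fin 2) (Fin 2) R) = 1 := by
  simp [planeSumMatrix]

variable [Fintype ι]

theorem planeSumMatrix_mul (g g' : ι → Matrix (Fin 2) (Fin 2) R) :
    planeSumMatrix (g * g') = planeSumMatrix g * planeSumMatrix g' := by
  simp [planeSumMatrix, fromBlocks_multiply, Matrix.mul_apply, Fin.sum_univ_two]

theorem planeBlock_planeSumMatrix_mul (g : ι → Matrix (Fin 2) (Fin 2) R)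
    (M : Matrix (ι ⊕ ι) (ι ⊕ ι) R) (i j : ι) :
    planeBlock (planeSumMatrix g * M) i j = g i * planeBlock M i j := by
  ext a b
  fin_cases a <;> fin_cases b <;>
    simp [planeBlock, planeSumMatrix, Matrix.mul_apply, diagonal_apply, Fin.sum_univ_two]

theorem planeBlock_mul_planeSumMatrix (M : Matrix (ι ⊕ ι) (ι ⊕ ι) R)
    (g : ι → Matrix (Fin 2) (Fin 2) R) (i j : ι) :
    planeBlock (M * planeSumMatrix g) i j = planeBlock M i j * g j := by
  ext a b
  fin_cases a <;> fin_cases b <;>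
    simp [planeBlock, planeSumMatrix, Matrix.mul_apply, diagonal_apply, Fin.sum_univ_two]

theorem planeSumMatrix_mem_symplecticGroup_iff {g : ι → Matrix (Fin 2) (Fin 2) R} :
    planeSumMatrix g ∈ symplecticGroup ι R ↔ ∀ i, (g i).det = 1 := by
  have h : planeSumMatrix g * J ι R * (planeSumMatrix g)ᵀ =
      fromBlocks 0 (-diagonal fun i ↦ (g i).det) (diagonal fun i ↦ (g i).det) 0 := by
    simp only [planeSumMatrix, J, fromBlocks_transpose, fromBlocks_multiply, det_fin_two]
    congr 1 <;> ext i j <;> obtain rfl | hij := eq_or_ne i j <;> simp [*] <;> ring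
  rw [SymplecticGroup.mem_iff, h, J, fromBlocks_inj, ← diagonal_one, neg_inj,
    diagonal_eq_diagonal_iff]
  tauto

/-- The embedding of `SL₂(R)^ι` in `Sp(R^(ι ⊕ ι))` as block sums over the hyperbolic planes; it
exists because `SL₂ = Sp₂`. -/
def planeSum : (ι → SpecialLinearGroup (Fin 2) R) →* symplecticGroup ι R where
  toFun g := ⟨planeSumMatrix fun i ↦ (g i : Matrix (Fin 2) (Fin 2) R),
    planeSumMatrix_mem_symplecticGroup_iff.2 fun i ↦ (g i).det_coe⟩
  map_one' := Subtype.ext planeSumMatrix_one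
  map_mul' _ _ := Subtype.ext (planeSumMatrix_mul _ _)

theorem planeSum_injective :
    Function.Injective (planeSum : (ι → SpecialLinearGroup (Fin 2) R) →* symplecticGroup ι R) :=
  fun _ _ h ↦ funext fun i ↦
    Subtype.ext (congrFun (planeSumMatrix_injective (congrArg Subtype.val h)) i)

theorem centralizer_planeSum {g : ι → SpecialLinearGroup (Fin 2) R}
    (hg : ∀ i j, i ≠ j → ∀ X : Matrix (Fin 2) (Fin 2) R, g i * X = X * g j → X = 0) :
    Subgroup.centralizer {planeSum g} =
      (Subgroup.pi Set.univ fun i ↦ Subgroup.centralizer {g i}).map planeSum := by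
  ext M
  simp only [Subgroup.mem_map, Subgroup.mem_pi, Subgroup.mem_centralizer_singleton_iff,
    Set.mem_univ, true_implies]
  constructor
  · intro hM
    have comm (i j : ι) : g i * planeBlock M.1 i j = planeBlock M.1 i j * g j :=
      calc g i * planeBlock M.1 i j
        _ = planeBlock (planeSum g * M).1 i j :=
          (planeBlock_planeSumMatrix_mul (fun i ↦ (g i : Matrix (Fin 2) (Fin 2) R)) M.1 i j).symm
        _ = planeBlock (M * planeSum g).1 i j := by rw [hM]
        _ = planeBlock M.1 i j * g j :=
          planeBlock_mul_planeSumMatrix M.1 (fun i ↦ (g i : Matrix (Fin 2) (Fin 2) R)) i j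
    have hblocks : planeSumMatrix (fun i ↦ planeBlock M.1 i i) = M.1 :=
      planeSumMatrix_planeBlock fun i j hij ↦ hg i j hij _ (comm i j)
    have hdet : ∀ i, (planeBlock M.1 i i).det = 1 := by
      rw [← planeSumMatrix_mem_symplecticGroup_iff, hblocks]
      exact M.2
    exact ⟨fun i ↦ ⟨planeBlock M.1 i i, hdet i⟩, fun i ↦ Subtype.ext (comm i i).symm,
      Subtype.ext hblocks⟩
  · rintro ⟨k, hk, rfl⟩
    rw [← map_mul, ← map_mul, show k * g = g * k from funext hk]

theorem natCard_centralizer_planeSum {g : ι → SpecialLinearGroup (Fin 2) R}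
    (hg : ∀ i j, i ≠ j → ∀ X : Matrix (Fin 2) (Fin 2) R, g i * X = X * g j → X = 0) :
    Nat.card (Subgroup.centralizer {planeSum g}) =
      ∏ i, Nat.card (Subgroup.centralizer {g i}) := by
  rw [centralizer_planeSum hg, Subgroup.card_map_of_injective planeSum_injective, ← Nat.card_pi]
  exact Nat.card_congr (Equiv.Set.univPi _)

end PlaneSum

section Trace

variable {R : Type*} [CommRing R]

theorem sq_eq_trace_smul_sub_one [Nontrivial R] {A : Matrix (Fin 2) (Fin 2) R} (hA : A.det = 1) :
    A ^ 2 = A.trace • A - 1 := by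
  have h := aeval_self_charpoly A
  simp only [charpoly_fin_two, hA, map_add, map_sub, map_mul, map_pow, map_one, Polynomial.aeval_X,
    Polynomial.aeval_C, ← Algebra.smul_def] at h
  rw [eq_sub_iff_add_eq, ← sub_eq_zero, ← h]
  abel

theorem eq_zero_of_mul_eq_mul_of_trace_ne [IsDomain R] {A B : SpecialLinearGroup (Fin 2) R}
    (hAB : trace (A : Matrix (Fin 2) (Fin 2) R) ≠ trace (B : Matrix (Fin 2) (Fin 2) R))
    {X : Matrix (Fin 2) (Fin 2) R} (hX : A * X = X * B) :
    X = 0 := by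
  have hsq : (A : Matrix (Fin 2) (Fin 2) R) ^ 2 * X = X * (B : Matrix (Fin 2) (Fin 2) R) ^ 2 := by
    rw [pow_two, pow_two, mul_assoc, hX, ← mul_assoc, hX, mul_assoc]
  have htrace : trace (A : Matrix (Fin 2) (Fin 2) R) • ((A : Matrix (Fin 2) (Fin 2) R) * X) =
      trace (B : Matrix (Fin 2) (Fin 2) R) • ((A : Matrix (Fin 2) (Fin 2) R) * X) := by
    rw [sq_eq_trace_smul_sub_one A.det_coe, sq_eq_trace_smul_sub_one B.det_coe] at hsq
    simpa only [sub_mul, mul_sub, one_mul, mul_one, sub_left_inj, smul_mul_assoc, mul_smul_comm,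
      ← hX] using hsq
  rw [← sub_eq_zero, ← sub_smul, smul_eq_zero_iff_right (sub_ne_zero.2 hAB)] at htrace
  have hA : IsUnit (A : Matrix (Fin 2) (Fin 2) R) := by simp [isUnit_iff_isUnit_det]
  exact hA.mul_right_eq_zero.1 htrace

end Trace

section Torus

theorem mem_range_leftMulMatrix_of_commute {n R S : Type*} [Fintype n] [DecidableEq n]
    [CommRing R] [CommRing S] [Algebra R S] (b : Module.Basis n R S) {z : S}
    (hz : Algebra.adjoin R {z} = ⊤) {M : Matrix n n R}
    (hM : Commute M (Algebra.leftMulMatrix b z)) :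
    M ∈ (Algebra.leftMulMatrix b).range := by
  have hcomm (x : S) : M * Algebra.leftMulMatrix b x = Algebra.leftMulMatrix b x * M := by
    have : Algebra.adjoin R {z} ≤
        (Subalgebra.centralizer R {M}).comap (Algebra.leftMulMatrix b) :=
      Algebra.adjoin_le (by simpa [Set.mem_centralizer_iff] using hM.eq)
    simpa [Subalgebra.mem_centralizer_iff] using this (hz ▸ Algebra.mem_top : x ∈ _)
  refine ⟨toLin b b M 1, (toLin b b).injective (LinearMap.ext fun x ↦ ?_)⟩
  have htoLin (y : S) : toLin b b (Algebra.leftMulMatrix b y) = Algebra.lmul R S y := by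
    rw [Algebra.leftMulMatrix_apply, toLin_toMatrix]
  have := LinearMap.congr_fun (congrArg (toLin b b) (hcomm x)) 1
  rw [toLin_mul b b b, toLin_mul b b b] at this
  simp_all [mul_comm]

variable (F E : Type*) [Field F] [Field E] [Algebra F E]

/-- The norm one group of `E / F`, used as the source of a nonsplit torus. -/
noncomputable abbrev normOneUnits : Subgroup Eˣ := (Units.map (Algebra.norm F (S := E))).ker

theorem natCard_normOneUnits_of_finrank_eq_two [Finite E] (hE : Module.finrank F E = 2) :
    Nat.card (normOneUnits F E) = Nat.card F + 1 := by
  have : Finite F := .of_injective _ (algebraMap F E).injective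
  have h := (normOneUnits F E).card_mul_index
  rw [Subgroup.index_ker, MonoidHom.range_eq_top.2 (FiniteField.unitsMap_norm_surjective F E),
    Subgroup.card_top, Nat.card_units, Nat.card_units,
    Module.natCard_eq_pow_finrank (K := F) (V := E), hE, ← one_pow 2, Nat.sq_sub_sq, one_pow] at h
  exact Nat.eq_of_mul_eq_mul_right (Nat.sub_pos_of_lt Finite.one_lt_card) h

variable {F E}

theorem adjoin_eq_top_of_sq_ne_one (hE : Module.finrank F E = 2) {z : normOneUnits F E}
    (hz : z ^ 2 ≠ 1) : Algebra.adjoin F {(z.1 : E)} = ⊤ := by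
  have := Subalgebra.isSimpleOrder_of_finrank_prime F E (hE ▸ Nat.prime_two)
  refine (eq_bot_or_eq_top _).resolve_left fun h ↦ hz ?_
  obtain ⟨a, ha⟩ := Algebra.mem_bot.1 (h ▸ Algebra.self_mem_adjoin_singleton F (z.1 : E))
  have hnorm : Algebra.norm F (z.1 : E) = 1 := congrArg Units.val z.2
  rw [← ha, Algebra.norm_algebraMap, hE] at hnorm
  ext
  simp [← ha, ← map_pow, hnorm]

variable {n : Type*} [Fintype n] [DecidableEq n] (b : Module.Basis n F E)

/-- Multiplication by elements of norm one, written in the basis `b` of `E / F`. -/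
noncomputable def normOneToSL : normOneUnits F E →* SpecialLinearGroup n F where
  toFun z := ⟨Algebra.leftMulMatrix b (z.1 : E), by
    rw [← Algebra.norm_eq_matrix_det]; exact congrArg Units.val z.2⟩
  map_one' := Subtype.ext (map_one _)
  map_mul' _ _ := Subtype.ext (map_mul _ _ _)

theorem normOneToSL_injective : Function.Injective (normOneToSL b) := fun _ _ h ↦
  Subtype.ext (Units.ext (Algebra.leftMulMatrix_injective b (congrArg Subtype.val h)))

theorem centralizer_normOneToSL {z : normOneUnits F E} (hz : Algebra.adjoin F {(z.1 : E)} = ⊤) :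
    Subgroup.centralizer {normOneToSL b z} = (normOneToSL b).range := by
  ext M
  rw [Subgroup.mem_centralizer_singleton_iff]
  constructor
  · intro hM
    obtain ⟨y, hy⟩ := mem_range_leftMulMatrix_of_commute b hz (congrArg Subtype.val hM)
    have hnorm : Algebra.norm F y = 1 := by
      rw [Algebra.norm_eq_matrix_det b]
      exact (congrArg det hy).trans M.2
    have hy0 : y ≠ 0 := (Algebra.norm_ne_zero_iff_of_basis b).1 (hnorm ▸ one_ne_zero)
    exact ⟨⟨Units.mk0 y hy0, Units.ext hnorm⟩, Subtype.ext hy⟩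
  · rintro ⟨y, rfl⟩
    rw [← map_mul, ← map_mul, mul_comm]

theorem natCard_centralizer_normOneToSL [Finite E] (hE : Module.finrank F E = 2)
    {z : normOneUnits F E} (hz : z ^ 2 ≠ 1) :
    Nat.card (Subgroup.centralizer {normOneToSL b z}) = Nat.card F + 1 := by
  rw [centralizer_normOneToSL b (adjoin_eq_top_of_sq_ne_one hE hz),
    ← natCard_normOneUnits_of_finrank_eq_two F E hE]
  exact Nat.card_congr (MonoidHom.ofInjective (normOneToSL_injective b)).toEquiv.symm

theorem eq_or_eq_inv_of_trace_eq (b : Module.Basis (Fin 2) F E) {z w : normOneUnits F E}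
    (h : trace (normOneToSL b z : Matrix (Fin 2) (Fin 2) F) =
      trace (normOneToSL b w : Matrix (Fin 2) (Fin 2) F)) :
    z = w ∨ z = w⁻¹ := by
  have hquad (u : normOneUnits F E) : (u.1 : E) ^ 2 =
      algebraMap F E (trace (normOneToSL b u : Matrix (Fin 2) (Fin 2) F)) * u.1 - 1 := by
    apply Algebra.leftMulMatrix_injective b
    rw [← Algebra.smul_def, map_sub, map_pow, map_smul, map_one]
    exact sq_eq_trace_smul_sub_one (normOneToSL b u).det_coe
  have key : ((z.1 : E) - w.1) * (z.1 * w.1 - 1) = 0 := by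
    linear_combination (w.1 : E) * hquad z - (z.1 : E) * hquad w +
      (z.1 : E) * (w.1 : E) * congrArg (algebraMap F E) h
  refine (mul_eq_zero.1 key).imp (fun h ↦ ?_) fun h ↦ ?_
  · exact Subtype.ext (Units.ext (sub_eq_zero.1 h))
  · exact eq_inv_of_mul_eq_one_left (Subtype.ext (Units.ext (sub_eq_zero.1 h)))

theorem exists_orderOf_eq_and_natCard_centralizer_eq [Finite F] (hF : 3 < Nat.card F) :
    ∃ h : symplecticGroup (Fin 2) F, orderOf h = Nat.card F + 1 ∧
      Nat.card (Subgroup.centralizer {h}) = (Nat.card F + 1) ^ 2 := by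
  obtain ⟨p, hp⟩ := CharP.exists F
  have : Fact p.Prime := ⟨CharP.char_is_prime F p⟩
  let E := FiniteField.Extension F p 2
  have hE : Module.finrank F E = 2 := FiniteField.finrank_extension F p 2
  have : Finite E := Module.finite_of_finite F
  obtain ⟨ζ, hζ⟩ := IsCyclic.exists_ofOrder_eq_natCard (α := normOneUnits F E)
  rw [natCard_normOneUnits_of_finrank_eq_two F E hE] at hζ
  have hζ_pow {k : ℕ} (hk0 : k ≠ 0) (hk : k < 5) : ζ ^ k ≠ 1 := by
    apply pow_ne_one_of_lt_orderOf hk0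
    omega
  let b : Module.Basis (Fin 2) F E := Module.finBasisOfFinrankEq F E hE
  let torus : normOneUnits F E →* symplecticGroup (Fin 2) F :=
    planeSum.comp (MonoidHom.pi ![normOneToSL b, (normOneToSL b).comp (powMonoidHom 2)])
  have htorus : Function.Injective torus := planeSum_injective.comp fun x y h ↦
    normOneToSL_injective b (congrFun h 0)
  have htrace :
      trace (normOneToSL b ζ : Matrix (Fin 2) (Fin 2) F) ≠
        trace (normOneToSL b (ζ ^ 2) : Matrix (Fin 2) (Fin 2) F) := by
    intro h
    rcases eq_or_eq_inv_of_trace_eq b h with h | h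
    · exact hζ_pow one_ne_zero (by simp) (by simpa [pow_two] using h)
    · exact hζ_pow three_ne_zero (by simp) (by rwa [pow_succ', ← eq_inv_iff_mul_eq_one])
  refine ⟨torus ζ, (orderOf_injective torus htorus ζ).trans hζ, ?_⟩
  refine (natCard_centralizer_planeSum ?_).trans ?_
  · rintro i j hij X h
    fin_cases i <;> fin_cases j
    · exact absurd rfl hij
    · exact eq_zero_of_mul_eq_mul_of_trace_ne htrace h
    · exact eq_zero_of_mul_eq_mul_of_trace_ne htrace.symm h
    · exact absurd rfl hij
  · rw [Fin.prod_univ_two, pow_two]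
    congr 1
    · exact natCard_centralizer_normOneToSL b hE (hζ_pow two_ne_zero (by simp))
    · exact natCard_centralizer_normOneToSL b hE
        (by simpa only [powMonoidHom_apply, ← pow_mul] using hζ_pow four_ne_zero (by simp))

end Torus

section Unipotent

variable {l R : Type*} [Fintype l] [DecidableEq l] [CommRing R]

theorem one_add_mul_J_mem_symplecticGroup {N : Matrix (l ⊕ l) (l ⊕ l) R} (hN : Nᵀ = N)
    (hNJN : N * J l R * N = 0) : 1 + N * J l R ∈ symplecticGroup l R := by
  rw [SymplecticGroup.mem_iff, transpose_add, transpose_one, transpose_mul, hN, J_transpose]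
  calc (1 + N * J l R) * J l R * (1 + -J l R * N)
    _ = J l R + N * (J l R * J l R) - (J l R * J l R) * N - N * (J l R * J l R) * (J l R * N) := by
        noncomm_ring
    _ = J l R + N * J l R * N := by rw [J_squared]; noncomm_ring
    _ = J l R := by rw [hNJN, add_zero]

theorem one_add_mul_J_eq_one_iff {N : Matrix (l ⊕ l) (l ⊕ l) R} : 1 + N * J l R = 1 ↔ N = 0 := by
  have hJ : IsUnit (J l R) := (isUnit_iff_isUnit_det _).2 (isUnit_det_J l R)
  rw [add_eq_left, hJ.mul_left_eq_zero]

theorem one_add_mul_J_pow_char (p : ℕ) [Fact p.Prime] [CharP R p] {N : Matrix (l ⊕ l) (l ⊕ l) R}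
    (hNJN : N * J l R * N = 0) : (1 + N * J l R) ^ p = 1 := by
  cases isEmpty_or_nonempty (l ⊕ l)
  · exact Subsingleton.elim _ _
  · have hsq : (N * J l R) ^ 2 = 0 := by rw [pow_two, ← mul_assoc, hNJN, zero_mul]
    rw [add_pow_char_of_commute p (Commute.one_left _), one_pow,
      pow_eq_zero_of_le (Fact.out : p.Prime).two_le hsq, add_zero]

theorem commute_one_add_mul_J {N h : Matrix (l ⊕ l) (l ⊕ l) R} (hh : h ∈ symplecticGroup l R)
    (hN : h * N * hᵀ = N) : Commute (1 + N * J l R) h := by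
  refine (Commute.one_left h).add_left ?_
  calc N * J l R * h
    _ = h * N * (hᵀ * J l R * h) := by nth_rw 1 [← hN]; noncomm_ring
    _ = h * (N * J l R) := by rw [SymplecticGroup.mem_iff'.1 hh, mul_assoc]

theorem dvd_natCard_centralizer_of_conj_eq (p : ℕ) [Fact p.Prime] [CharP R p]
    (h : symplecticGroup l R) {N : Matrix (l ⊕ l) (l ⊕ l) R} (hN0 : N ≠ 0) (hN : Nᵀ = N)
    (hNJN : N * J l R * N = 0) (hhN : h * N * (h : Matrix (l ⊕ l) (l ⊕ l) R)ᵀ = N) :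
    p ∣ Nat.card (Subgroup.centralizer {h}) := by
  let u : symplecticGroup l R := ⟨1 + N * J l R, one_add_mul_J_mem_symplecticGroup hN hNJN⟩
  have hcomm : u * h = h * u := Subtype.ext (commute_one_add_mul_J h.2 hhN)
  have horder : orderOf u = p := orderOf_eq_prime (Subtype.ext (one_add_mul_J_pow_char p hNJN))
    fun hu ↦ hN0 (one_add_mul_J_eq_one_iff.1 (congrArg Subtype.val hu))
  rw [← horder]
  exact Subgroup.orderOf_dvd_natCard _ (Subgroup.mem_centralizer_singleton_iff.2 hcomm)

theorem dotProduct_J_mulVec_comm (v w : l ⊕ l → R) :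
    w ⬝ᵥ J l R *ᵥ v = -(v ⬝ᵥ J l R *ᵥ w) := by
  rw [dotProduct_mulVec, ← mulVec_transpose, J_transpose, neg_mulVec, neg_dotProduct,
    dotProduct_comm]

theorem dotProduct_J_mulVec_self (v : l ⊕ l → R) : v ⬝ᵥ J l R *ᵥ v = 0 := by
  obtain ⟨x, y, rfl⟩ : ∃ x y : l → R, v = Sum.elim x y := ⟨_, _, (Sum.elim_comp_inl_inr v).symm⟩
  simp [J, fromBlocks_mulVec, neg_mulVec, dotProduct_comm]

theorem mul_vecMulVec_mul_transpose {n : Type*} [Fintype n] (A : Matrix n n R) (v w : n → R) :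
    A * vecMulVec v w * Aᵀ = vecMulVec (A *ᵥ v) (A *ᵥ w) := by
  rw [mul_vecMulVec, vecMulVec_mul, vecMul_transpose]

theorem vecMulVec_mul_mul_vecMulVec {n : Type*} [Fintype n] (a b c d : n → R) (M : Matrix n n R) :
    vecMulVec a b * M * vecMulVec c d = (b ⬝ᵥ M *ᵥ c) • vecMulVec a d := by
  rw [mul_assoc, mul_vecMulVec, vecMulVec_mul_vecMulVec, vecMulVec_smul]

theorem dvd_natCard_centralizer_of_mulVec_eq_smul [NoZeroDivisors R] (p : ℕ) [Fact p.Prime]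
    [CharP R p] (h : symplecticGroup l R) {v : l ⊕ l → R} (hv0 : v ≠ 0) {ε : R} (hε : ε * ε = 1)
    (hv : (h : Matrix (l ⊕ l) (l ⊕ l) R) *ᵥ v = ε • v) :
    p ∣ Nat.card (Subgroup.centralizer {h}) := by
  refine dvd_natCard_centralizer_of_conj_eq p h (N := vecMulVec v v) ?_ (transpose_vecMulVec v v)
    ?_ ?_
  · simpa [vecMulVec_eq_zero] using hv0
  · rw [vecMulVec_mul_mul_vecMulVec, dotProduct_J_mulVec_self, zero_smul]
  · rw [mul_vecMulVec_mul_transpose, hv, smul_vecMulVec, vecMulVec_smul, smul_smul, hε, one_smul]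

theorem dvd_natCard_centralizer_of_isotropic_plane (p : ℕ) [Fact p.Prime] [CharP R p]
    (h : symplecticGroup l R) {v w : l ⊕ l → R} {t : R} (ht : t ≠ 2)
    (hli : LinearIndependent R ![v, w]) (hvw : v ⬝ᵥ J l R *ᵥ w = 0)
    (hv : (h : Matrix (l ⊕ l) (l ⊕ l) R) *ᵥ v = w)
    (hw : (h : Matrix (l ⊕ l) (l ⊕ l) R) *ᵥ w = t • w - v) :
    p ∣ Nat.card (Subgroup.centralizer {h}) := by
  have hwv : w ⬝ᵥ J l R *ᵥ v = 0 := by rw [dotProduct_J_mulVec_comm, hvw, neg_zero]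
  -- In every characteristic, `2 v⊗v - t (v⊗w + w⊗v) + 2 w⊗w` is invariant under `h`.
  refine dvd_natCard_centralizer_of_conj_eq p h
    (N := vecMulVec ((2 : R) • v - t • w) v + vecMulVec ((2 : R) • w - t • v) w)
    (fun hN ↦ ?_) ?_ ?_ ?_
  · rw [LinearIndependent.pair_iff] at hli
    have coeff (i : l ⊕ l) : 2 * v i - t * w i = 0 ∧ 2 * w i - t * v i = 0 := by
      refine hli _ _ (funext fun j ↦ ?_)
      simpa [vecMulVec_apply] using congrFun₂ hN i j
    obtain ⟨h2, ht0⟩ := hli 2 (-t) (funext fun i ↦ by simpa [sub_eq_add_neg] using (coeff i).1)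
    exact ht (by rw [neg_eq_zero.1 ht0, h2])
  · ext i j
    simp only [transpose_apply, Matrix.add_apply, vecMulVec_apply, Pi.sub_apply, Pi.smul_apply,
      smul_eq_mul]
    ring
  · simp [add_mul, mul_add, vecMulVec_mul_mul_vecMulVec, dotProduct_J_mulVec_self, mulVec_sub,
      mulVec_smul, hvw, hwv]
  · rw [mul_add, add_mul, mul_vecMulVec_mul_transpose, mul_vecMulVec_mul_transpose]
    simp only [mulVec_sub, mulVec_smul, hv, hw]
    ext i j
    simp only [Matrix.add_apply, vecMulVec_apply, Pi.sub_apply, Pi.smul_apply,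
      smul_eq_mul]
    ring

end Unipotent

theorem exists_ne_zero_dotProduct_mulVec_eq_zero {n K : Type*} [Fintype n] [Field K] [Finite K]
    (hn : 2 < Fintype.card n) (M : Matrix n n K) : ∃ v ≠ 0, v ⬝ᵥ M *ᵥ v = 0 := by
  classical
  have := Fintype.ofFinite K
  obtain ⟨p, hp⟩ := CharP.exists K
  have hprime : p.Prime := CharP.char_is_prime K p
  let Q : MvPolynomial n K := ∑ i, MvPolynomial.X i * M.toMvPolynomial i
  have hQ_eval (v : n → K) : MvPolynomial.eval v Q = v ⬝ᵥ M *ᵥ v := by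
    simp [Q, dotProduct, toMvPolynomial_eval_eq_apply]
  have hQ_deg : Q.totalDegree ≤ 2 := MvPolynomial.totalDegree_finsetSum_le fun i _ ↦
    (MvPolynomial.totalDegree_mul _ _).trans <| add_le_add (MvPolynomial.totalDegree_X i).le
      (M.toMvPolynomial_totalDegree_le i)
  have hdvd := char_dvd_card_solutions p (hQ_deg.trans_lt hn)
  have hzero : MvPolynomial.eval 0 Q = 0 := by rw [hQ_eval, zero_dotProduct]
  have : Nontrivial {v // MvPolynomial.eval v Q = 0} := Fintype.one_lt_card_iff_nontrivial.1 <|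
    hprime.one_lt.trans_le <| Nat.le_of_dvd (Fintype.card_pos_iff.2 ⟨0, hzero⟩) hdvd
  obtain ⟨⟨v, hv⟩, hv0⟩ := exists_ne (⟨0, hzero⟩ : {v // MvPolynomial.eval v Q = 0})
  exact ⟨v, fun h ↦ hv0 (Subtype.ext h), hQ_eval v ▸ hv⟩

theorem isUnit_sub_smul_one_of_forall_mulVec_ne {n K : Type*} [Fintype n] [DecidableEq n] [Field K]
    {A : Matrix n n K} {a : K} (hA : ∀ v ≠ 0, A *ᵥ v ≠ a • v) : IsUnit (A - a • 1) := by
  rw [isUnit_iff_isUnit_det, isUnit_iff_ne_zero, ne_eq, ← exists_mulVec_eq_zero_iff]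
  rintro ⟨v, hv0, hv⟩
  rw [sub_mulVec, smul_mulVec, one_mulVec] at hv
  exact hA v hv0 (sub_eq_zero.1 hv)

theorem exists_sq_eq_smul_sub_one_of_card_le_three {n F : Type*} [Fintype n] [DecidableEq n]
    [Field F] [Fintype F] (hF : Fintype.card F ≤ 3) {A : Matrix n n F}
    (hA : A ^ (Fintype.card F + 1) = 1) (heig : ∀ ε : F, ε * ε = 1 → ∀ v ≠ 0, A *ᵥ v ≠ ε • v) :
    ∃ t : F, (∀ x : F, x ^ 2 ≠ t * x - 1) ∧ A ^ 2 = t • A - 1 := by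
  have hunit (ε : F) (hε : ε * ε = 1) : IsUnit (A - ε • 1) :=
    isUnit_sub_smul_one_of_forall_mulVec_ne (heig ε hε)
  have hcard : (Fintype.card F : F) = 0 := Nat.cast_card_eq_zero F
  have hfrob (x : F) : x ^ Fintype.card F = x := FiniteField.pow_card x
  obtain hq | hq : Fintype.card F = 2 ∨ Fintype.card F = 3 := by
    have := Fintype.one_lt_card (α := F)
    omega
  · rw [hq] at hcard hA
    simp only [hq] at hfrob
    have hfactor : (A - (1 : F) • 1) * (A ^ 2 + A + 1) = 0 := by
      rw [← sub_eq_zero.2 hA, one_smul]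
      noncomm_ring
    refine ⟨-1, fun x hx ↦ one_ne_zero (α := F) ?_, ?_⟩
    · linear_combination hx - hfrob x - x * hcard
    · rw [← sub_eq_zero, ← (hunit 1 (one_mul 1)).mul_right_eq_zero.1 hfactor, neg_one_smul]
      abel
  · rw [hq] at hcard hA
    simp only [hq] at hfrob
    have hfactor : (A - (1 : F) • 1) * (A - (-1 : F) • 1) * (A ^ 2 + 1) = 0 := by
      rw [← sub_eq_zero.2 hA, one_smul, neg_one_smul]
      noncomm_ring
    have hunits := (hunit 1 (one_mul 1)).mul (hunit (-1) (by ring))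
    refine ⟨0, fun x hx ↦ one_ne_zero (α := F) ?_, ?_⟩
    · linear_combination hx - x * (x * hcard - x * hx + hfrob x)
    · rw [zero_smul, zero_sub, ← add_eq_zero_iff_eq_neg]
      exact hunits.mul_right_eq_zero.1 hfactor

section SmallField

variable {l F : Type*} [Fintype l] [DecidableEq l] [Field F]

theorem dvd_natCard_centralizer_of_sq_eq_smul_sub_one [Finite F] (p : ℕ) [Fact p.Prime]
    [CharP F p] (hl : 1 < Fintype.card l) (h : symplecticGroup l F) {t : F}
    (ht : ∀ x : F, x ^ 2 ≠ t * x - 1)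
    (hh : (h : Matrix (l ⊕ l) (l ⊕ l) F) ^ 2 = t • h - 1) :
    p ∣ Nat.card (Subgroup.centralizer {h}) := by
  obtain ⟨v, hv0, hv⟩ := exists_ne_zero_dotProduct_mulVec_eq_zero
    (by rw [Fintype.card_sum]; omega) (J l F * (h : Matrix (l ⊕ l) (l ⊕ l) F))
  rw [← mulVec_mulVec] at hv
  have hsq : (h : Matrix (l ⊕ l) (l ⊕ l) F) *ᵥ (h *ᵥ v) =
      t • (h : Matrix (l ⊕ l) (l ⊕ l) F) *ᵥ v - v := by
    rw [mulVec_mulVec, ← pow_two, hh, sub_mulVec, smul_mulVec, one_mulVec]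
  refine dvd_natCard_centralizer_of_isotropic_plane p h (fun ht2 ↦ ht 1 ?_) ?_ hv rfl hsq
  · rw [ht2]
    ring
  · refine (LinearIndependent.pair_iff' hv0).2 fun a ha ↦ ht a (smul_left_injective F hv0 ?_)
    simp only [← ha, mulVec_smul, smul_smul] at hsq
    simpa only [pow_two, sub_smul, one_smul] using hsq

theorem dvd_natCard_centralizer_of_card_le_three [Fintype F] (p : ℕ) [Fact p.Prime]
    [CharP F p] (hF : Fintype.card F ≤ 3) (hl : 1 < Fintype.card l) {h : symplecticGroup l F}
    (hh : h ^ (Fintype.card F + 1) = 1) : p ∣ Nat.card (Subgroup.centralizer {h}) := by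
  by_cases! heig : ∃ ε : F, ε * ε = 1 ∧ ∃ v ≠ 0, (h : Matrix (l ⊕ l) (l ⊕ l) F) *ᵥ v = ε • v
  · obtain ⟨ε, hε, v, hv0, hv⟩ := heig
    exact dvd_natCard_centralizer_of_mulVec_eq_smul p h hv0 hε hv
  obtain ⟨t, ht, hsq⟩ :=
    exists_sq_eq_smul_sub_one_of_card_le_three hF (congrArg Subtype.val hh) heig
  exact dvd_natCard_centralizer_of_sq_eq_smul_sub_one p hl h ht hsq

end SmallField

theorem Sp4_small_centralizer_iff_general (F : Type*) [Field F] [Fintype F] :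
    (∃ h : symplecticGroup (Fin 2) F, orderOf h = Fintype.card F + 1 ∧
        Nat.card (Subgroup.centralizer {h}) = (Fintype.card F + 1) ^ 2) ↔ 3 < Fintype.card F := by
  constructor
  · rintro ⟨h, horder, hcard⟩
    by_contra! hF
    obtain ⟨p, hp⟩ := CharP.exists F
    have hprime : p.Prime := CharP.char_is_prime F p
    have : Fact p.Prime := ⟨hprime⟩
    have hdvd : p ∣ (Fintype.card F + 1) ^ 2 := hcard ▸
      dvd_natCard_centralizer_of_card_le_three p hF (by simp) (horder ▸ pow_orderOf_eq_one h)
    have hdvd_card : p ∣ Fintype.card F :=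
      (CharP.cast_eq_zero_iff F p _).1 (Nat.cast_card_eq_zero F)
    exact hprime.not_dvd_one ((Nat.dvd_add_right hdvd_card).1 (hprime.dvd_of_dvd_pow hdvd))
  · intro hF
    rw [← Nat.card_eq_fintype_card] at hF ⊢
    exact exists_orderOf_eq_and_natCard_centralizer_eq hF

/-- **Elements of order `q + 1` with small centralizer in `Sp₄(2^f)`.** For `q = 2^f`,
`Sp₄(F_q)` contains an element `h` of order `q + 1` whose centralizer has cardinality
exactly `(q + 1)^2` if and only if `f > 1`. -/
theorem Sp4_small_centralizer_iff (f : ℕ) (hf : 0 < f) (q : ℕ) (hq : q = 2 ^ f)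
    (F : Type*) [Field F] [Fintype F] (hF : Fintype.card F = q) :
    (∃ h : Matrix.symplecticGroup (Fin 2) F, orderOf h = q + 1 ∧
        Nat.card (Subgroup.centralizer {h}) = (q + 1) ^ 2) ↔ 1 < f := by
  subst hq
  rw [← hF, Sp4_small_centralizer_iff_general, hF]
  exact Nat.pow_le_pow_iff_right (n := 2) one_lt_two
end
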